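/- arXiv:1712.05454 — 4 statements merged into one kernel-verified Lean document; each statement's English description precedes it below -/
import Mathlib

section
/- Let Λ = {λ_1,…,λ_n} (n ≥ 2) be a realizable generalized Suleĭmanova spectrum with s_1(Λ) = 0. Then the multiset Λ' of critical points of Λ is realizable. -/
open Polynomial

/-- A finite multiset of complex numbers is realizable if it is the multiset of
roots (with multiplicity) of the characteristic polynomial of some entrywise
nonnegative real matrix. -/
def Realizable (Λ : Multiset ℂ) : Prop :=
  ∃ (m : ℕ) (A : Matrix (Fin m) (Fin m) ℝ),
    (∀ i j, 0 ≤ A i j) ∧ (A.charpoly.map (algebraMap ℝ ℂ)).roots = Λ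

/-!
Write the real polynomial with root multiset `Λ` as `P = (X - ρ) q`, where `ρ` is the only root in
the closed right half-plane and `q` is Hurwitz. Splitting off real linear and quadratic factors one
at a time shows that the coefficients of `q` satisfy `bₖ bₖ₊₃ ≤ bₖ₊₁ bₖ₊₂`. Since the `k`-th
coefficient of `P` is `bₖ₋₁ - ρ bₖ`, this inequality propagates nonpositivity from index `k + 2` to
index `k`: once the two coefficients just below the leading one are nonpositive, all lower ones are.
These two are `-s₁(Λ)`, which is minus a trace, and `e₂(Λ)`, which for a nonnegative matrix `A` of
trace zero is `-∑ aᵢⱼ aⱼᵢ` over `i < j`. Differentiation preserves the sign pattern, and the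
companion matrix of a monic polynomial with nonpositive lower coefficients is entrywise nonnegative.
-/

/-- A nonnegative sequence without internal zeros satisfying `bₖ bₖ₊₃ ≤ bₖ₊₁ bₖ₊₂`. The coefficients
of Hurwitz polynomials have this property, whereas they need not be log-concave, as
`X ^ 2 + ε * X + 1` shows for `0 < ε < 1`. -/
structure IsSkewLogConcave {R : Type*} [Semiring R] [PartialOrder R] (b : ℕ → R) : Prop where
  nonneg : ∀ k, 0 ≤ b k
  ordConnected_support : (Function.support b).OrdConnected
  mul_le_mul_three : ∀ k, b k * b (k + 3) ≤ b (k + 1) * b (k + 2)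

namespace IsSkewLogConcave

lemma pos_of_mem_Icc {R : Type*} [Semiring R] [PartialOrder R] {b : ℕ → R}
    (hb : IsSkewLogConcave b) {i j k : ℕ} (hi : b i ≠ 0) (hk : b k ≠ 0) (hj : j ∈ Set.Icc i k) :
    0 < b j :=
  (hb.nonneg j).lt_of_ne' (hb.ordConnected_support.out hi hk hj)

lemma coeff_C {R : Type*} [Semiring R] [PartialOrder R] {a : R} (ha : 0 ≤ a) :
    IsSkewLogConcave (C a).coeff where
  nonneg k := by rw [Polynomial.coeff_C]; split_ifs <;> simp [ha]
  ordConnected_support := by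
    refine ⟨fun _ _ k hk j ⟨_, hjk⟩ ↦ ?_⟩
    obtain rfl : k = 0 := by_contra fun h ↦ hk (coeff_C_of_ne_zero h)
    rwa [Nat.le_zero.mp hjk]
  mul_le_mul_three k := by simp [coeff_C_succ]

variable {R : Type*} [CommRing R] [LinearOrder R] [IsStrictOrderedRing R] {b : ℕ → R}

lemma mul_le_mul_four (hb : IsSkewLogConcave b) (k : ℕ) :
    b k * b (k + 4) ≤ b (k + 2) * b (k + 2) := by
  rcases eq_or_ne (b k * b (k + 4)) 0 with h | h
  · exact h.trans_le (mul_nonneg (hb.nonneg _) (hb.nonneg _))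
  obtain ⟨hk, hk4⟩ := mul_ne_zero_iff.mp h
  have h_pos : 0 < b (k + 1) * b (k + 3) :=
    mul_pos (hb.pos_of_mem_Icc hk hk4 ⟨by lia, by lia⟩)
      (hb.pos_of_mem_Icc hk hk4 ⟨by lia, by lia⟩)
  refine le_of_mul_le_mul_left ?_ h_pos
  calc b (k + 1) * b (k + 3) * (b k * b (k + 4))
      = b k * b (k + 3) * (b (k + 1) * b (k + 4)) := by ring
    _ ≤ b (k + 1) * b (k + 2) * (b (k + 2) * b (k + 3)) :=
        mul_le_mul (hb.mul_le_mul_three k) (hb.mul_le_mul_three (k + 1))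
          (mul_nonneg (hb.nonneg _) (hb.nonneg _)) (mul_nonneg (hb.nonneg _) (hb.nonneg _))
    _ = b (k + 1) * b (k + 3) * (b (k + 2) * b (k + 2)) := by ring

lemma mul_le_mul_five (hb : IsSkewLogConcave b) (k : ℕ) :
    b k * b (k + 5) ≤ b (k + 1) * b (k + 4) := by
  rcases eq_or_ne (b k * b (k + 5)) 0 with h | h
  · exact h.trans_le (mul_nonneg (hb.nonneg _) (hb.nonneg _))
  obtain ⟨hk, hk5⟩ := mul_ne_zero_iff.mp h
  have h_pos : 0 < b (k + 2) * b (k + 3) :=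
    mul_pos (hb.pos_of_mem_Icc hk hk5 ⟨by lia, by lia⟩)
      (hb.pos_of_mem_Icc hk hk5 ⟨by lia, by lia⟩)
  refine le_of_mul_le_mul_left ?_ h_pos
  calc b (k + 2) * b (k + 3) * (b k * b (k + 5))
      = b k * b (k + 3) * (b (k + 2) * b (k + 5)) := by ring
    _ ≤ b (k + 1) * b (k + 2) * (b (k + 3) * b (k + 4)) :=
        mul_le_mul (hb.mul_le_mul_three k) (hb.mul_le_mul_three (k + 2))
          (mul_nonneg (hb.nonneg _) (hb.nonneg _)) (mul_nonneg (hb.nonneg _) (hb.nonneg _))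
    _ = b (k + 2) * b (k + 3) * (b (k + 1) * b (k + 4)) := by ring

lemma three_term_mul_le_mul_three (hb : IsSkewLogConcave b) {u v w : R} (hu : 0 ≤ u) (hv : 0 ≤ v)
    (hw : 0 ≤ w) (k : ℕ) :
    (u * b k + v * b (k + 1) + w * b (k + 2)) *
        (u * b (k + 3) + v * b (k + 3 + 1) + w * b (k + 3 + 2)) ≤
      (u * b (k + 1) + v * b (k + 1 + 1) + w * b (k + 1 + 2)) *
        (u * b (k + 2) + v * b (k + 2 + 1) + w * b (k + 2 + 2)) := by
  -- After expansion, the inequality holds for the coefficient of each monomial in `u, v, w`.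
  have uu := mul_le_mul_of_nonneg_left (hb.mul_le_mul_three k) (mul_nonneg hu hu)
  have vv := mul_le_mul_of_nonneg_left (hb.mul_le_mul_three (k + 1)) (mul_nonneg hv hv)
  have ww := mul_le_mul_of_nonneg_left (hb.mul_le_mul_three (k + 2)) (mul_nonneg hw hw)
  have uv := mul_le_mul_of_nonneg_left (hb.mul_le_mul_four k) (mul_nonneg hu hv)
  have vw := mul_le_mul_of_nonneg_left (hb.mul_le_mul_four (k + 1)) (mul_nonneg hv hw)
  have uw := mul_le_mul_of_nonneg_left (hb.mul_le_mul_five k) (mul_nonneg hu hw)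
  simp only [add_assoc, Nat.reduceAdd] at uu vv ww uv vw uw ⊢
  linarith

theorem three_term_combination (hb : IsSkewLogConcave b) {u v w : R} (hu : 0 ≤ u) (hv : 0 < v)
    (hw : 0 < w) : IsSkewLogConcave fun k ↦ u * b k + v * b (k + 1) + w * b (k + 2) where
  nonneg k :=
    add_nonneg (add_nonneg (mul_nonneg hu (hb.nonneg _)) (mul_nonneg hv.le (hb.nonneg _)))
      (mul_nonneg hw.le (hb.nonneg _))
  ordConnected_support := by
    refine ⟨fun i hi k hk j ⟨hij, hjk⟩ ↦ ?_⟩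
    rcases hjk.eq_or_lt with rfl | hjk
    · exact hk
    have exists_ne_zero {n : ℕ} (hn : u * b n + v * b (n + 1) + w * b (n + 2) ≠ 0) :
        ∃ m ∈ Set.Icc n (n + 2), b m ≠ 0 := by
      by_contra! h
      exact hn (by simp [h n (by simp), h (n + 1) (by simp), h (n + 2) (by simp)])
    obtain ⟨i', ⟨-, hi'j⟩, hi'⟩ := exists_ne_zero hi
    obtain ⟨k', ⟨hjk', -⟩, hk'⟩ := exists_ne_zero hk
    have h_pos : 0 < b (j + 1) ∨ 0 < b (j + 2) := by
      rcases (show j + 1 ≤ k' by lia).eq_or_lt with rfl | hlt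
      · exact .inl ((hb.nonneg _).lt_of_ne' hk')
      · exact .inr (hb.pos_of_mem_Icc hi' hk' ⟨by lia, hlt⟩)
    have h0 := mul_nonneg hu (hb.nonneg j)
    have h1 := mul_nonneg hv.le (hb.nonneg (j + 1))
    have h2 := mul_nonneg hw.le (hb.nonneg (j + 2))
    refine ne_of_gt ?_
    rcases h_pos with h | h
    · exact add_pos_of_pos_of_nonneg (add_pos_of_nonneg_of_pos h0 (mul_pos hv h)) h2
    · exact add_pos_of_nonneg_of_pos (add_nonneg h0 h1) (mul_pos hw h)
  mul_le_mul_three := hb.three_term_mul_le_mul_three hu hv.le hw.le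

lemma sub_mul_nonpos_of_add_two (hb : IsSkewLogConcave b) {ρ : R} {k : ℕ} (hpos : 0 < b (k + 3))
    (h : b (k + 2) - ρ * b (k + 3) ≤ 0) : b k - ρ * b (k + 1) ≤ 0 := by
  refine sub_nonpos.mpr (le_of_mul_le_mul_right ?_ hpos)
  calc b k * b (k + 3) ≤ b (k + 1) * b (k + 2) := hb.mul_le_mul_three k
    _ ≤ b (k + 1) * (ρ * b (k + 3)) := mul_le_mul_of_nonneg_left (sub_nonpos.mp h) (hb.nonneg _)
    _ = ρ * b (k + 1) * b (k + 3) := by ring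

lemma coeff_X_mul {q : R[X]} (hq : IsSkewLogConcave q.coeff) :
    IsSkewLogConcave (X * q).coeff where
  nonneg k := by
    cases k with
    | zero => simp
    | succ k => simpa using hq.nonneg k
  ordConnected_support := by
    refine ⟨fun i hi k hk j hj ↦ ?_⟩
    obtain ⟨hij, hjk⟩ := hj
    cases i with
    | zero => simp at hi
    | succ i =>
      obtain ⟨j, rfl⟩ := Nat.exists_eq_add_of_le' (Nat.le_of_add_left_le hij)
      obtain ⟨k, rfl⟩ := Nat.exists_eq_add_of_le' (Nat.le_of_add_left_le (hij.trans hjk))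
      simp only [Function.mem_support, Polynomial.coeff_X_mul] at hi hk ⊢
      exact hq.ordConnected_support.out hi hk ⟨by lia, by lia⟩
  mul_le_mul_three k := by
    cases k with
    | zero => simpa using mul_nonneg (hq.nonneg 0) (hq.nonneg 1)
    | succ k => simpa [add_right_comm] using hq.mul_le_mul_three k

theorem coeff_quadratic_mul {q : R[X]} (hq : IsSkewLogConcave q.coeff) {u v w : R} (hu : 0 ≤ u)
    (hv : 0 < v) (hw : 0 < w) :
    IsSkewLogConcave ((C u * X ^ 2 + C v * X + C w) * q).coeff := by
  convert hq.coeff_X_mul.coeff_X_mul.three_term_combination hu hv hw using 1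
  ext k
  rw [← coeff_X_pow_mul _ 2 k,
    show X ^ 2 * ((C u * X ^ 2 + C v * X + C w) * q) =
      C u * (X ^ 2 * (X * (X * q))) + C v * (X * (X * (X * q))) + C w * (X * (X * q)) by ring]
  simp only [coeff_add, coeff_C_mul, Polynomial.coeff_X_mul, coeff_X_pow_mul]

end IsSkewLogConcave

lemma natDegree_quadratic_ne_zero {R : Type*} [Semiring R] {u v w : R} (hv : v ≠ 0) :
    (C u * X ^ 2 + C v * X + C w).natDegree ≠ 0 := fun h ↦
  hv (by simpa [coeff_X, coeff_C] using coeff_eq_zero_of_natDegree_lt (h.trans_lt one_pos))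

lemma leadingCoeff_quadratic_pos {R : Type*} [Semiring R] [PartialOrder R] {u v w : R}
    (hu : 0 ≤ u) (hv : 0 < v) : 0 < (C u * X ^ 2 + C v * X + C w).leadingCoeff := by
  rcases hu.eq_or_lt with rfl | hu
  · simpa [leadingCoeff_linear hv.ne'] using hv
  · rwa [leadingCoeff_quadratic hu.ne']

/-- A Hurwitz (stable) real polynomial: all its complex roots lie in the open left half-plane.
The zero polynomial is excluded, since every complex number is a root of it. -/
def IsHurwitz (q : ℝ[X]) : Prop :=
  ∀ z : ℂ, aeval z q = 0 → z.re < 0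

namespace IsHurwitz

variable {q : ℝ[X]}

lemma of_dvd {r : ℝ[X]} (hq : IsHurwitz q) (h : r ∣ q) : IsHurwitz r :=
  fun z hz ↦ hq z (aeval_eq_zero_of_dvd_aeval_eq_zero h hz)

lemma coeff_zero_ne_zero (hq : IsHurwitz q) : q.coeff 0 ≠ 0 := fun h ↦
  (hq 0 (by rw [← coeff_zero_eq_aeval_zero', h, map_zero])).false

lemma exists_quadratic_dvd (hq : IsHurwitz q) (hdeg : q.natDegree ≠ 0) :
    ∃ u v w : ℝ, 0 ≤ u ∧ 0 < v ∧ 0 < w ∧ C u * X ^ 2 + C v * X + C w ∣ q := by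
  obtain ⟨z, hz⟩ : ∃ z : ℂ, aeval z q = 0 :=
    IsAlgClosed.exists_aeval_eq_zero _ q fun h ↦ hdeg (natDegree_eq_of_degree_eq_some h)
  have hre := hq z hz
  by_cases him : z.im = 0
  · refine ⟨0, 1, -z.re, le_rfl, one_pos, neg_pos.mpr hre, ?_⟩
    have hz_real : algebraMap ℝ ℂ z.re = z := Complex.ext rfl him.symm
    have hroot : q.IsRoot z.re := by
      rw [← hz_real, aeval_algebraMap_eq_zero_iff] at hz
      simpa using hz
    simpa [sub_eq_add_neg] using dvd_iff_isRoot.mpr hroot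
  · have hz_ne : z ≠ 0 := by rintro rfl; exact him rfl
    refine ⟨1, -(2 * z.re), ‖z‖ ^ 2, zero_le_one, by linarith, by positivity, ?_⟩
    simpa [sub_eq_add_neg] using q.quadratic_dvd_of_aeval_eq_zero_im_ne_zero hz him

theorem isSkewLogConcave_coeff (hq : IsHurwitz q) (hlead : 0 < q.leadingCoeff) :
    IsSkewLogConcave q.coeff := by
  induction hN : q.natDegree using Nat.strong_induction_on generalizing q with
  | _ N ih =>
  by_cases hdeg : q.natDegree = 0
  · rw [eq_C_of_natDegree_eq_zero hdeg]
    exact .coeff_C (by simpa [leadingCoeff, hdeg] using hlead.le)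
  obtain ⟨u, v, w, hu, hv, hw, r, hqr⟩ := hq.exists_quadratic_dvd hdeg
  have hr_lead : 0 < r.leadingCoeff := by
    rw [hqr, leadingCoeff_mul] at hlead
    exact pos_of_mul_pos_right hlead (leadingCoeff_quadratic_pos hu hv).le
  have hr_deg : r.natDegree < N := by
    have hf_lead := (leadingCoeff_quadratic_pos (w := w) hu hv).ne'
    rw [← hN, hqr, natDegree_mul (leadingCoeff_ne_zero.mp hf_lead)
      (leadingCoeff_ne_zero.mp hr_lead.ne')]
    exact Nat.lt_add_of_pos_left (natDegree_quadratic_ne_zero hv.ne').bot_lt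
  rw [hqr]
  exact (ih _ hr_deg (hq.of_dvd (hqr ▸ dvd_mul_left ..)) hr_lead rfl).coeff_quadratic_mul hu hv hw

theorem coeff_pos (hq : IsHurwitz q) (hlead : 0 < q.leadingCoeff) {k : ℕ} (hk : k ≤ q.natDegree) :
    0 < q.coeff k :=
  (hq.isSkewLogConcave_coeff hlead).pos_of_mem_Icc hq.coeff_zero_ne_zero hlead.ne'
    ⟨k.zero_le, hk⟩

theorem coeff_X_sub_C_mul_nonpos (hq : IsHurwitz q) (hlead : 0 < q.leadingCoeff) {ρ : ℝ}
    (h1 : ((X - C ρ) * q).coeff q.natDegree ≤ 0)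
    (h2 : ∀ k, k + 1 = q.natDegree → ((X - C ρ) * q).coeff k ≤ 0) {k : ℕ}
    (hk : k ≤ q.natDegree) : ((X - C ρ) * q).coeff k ≤ 0 := by
  have hb : IsSkewLogConcave (X * q).coeff := (hq.isSkewLogConcave_coeff hlead).coeff_X_mul
  have h_coeff (i : ℕ) :
      ((X - C ρ) * q).coeff i = (X * q).coeff i - ρ * (X * q).coeff (i + 1) := by
    rw [sub_mul, coeff_sub, coeff_C_mul, coeff_X_mul]
  obtain ⟨j, hj⟩ := Nat.exists_eq_add_of_le hk
  induction j using Nat.twoStepInduction generalizing k with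
  | zero => rwa [show k = q.natDegree from hj.symm]
  | one => exact h2 k hj.symm
  | more j ih _ =>
    have h_pos : 0 < (X * q).coeff (k + 3) := by
      rw [coeff_X_mul]
      exact hq.coeff_pos hlead (by lia)
    have h_add_two := ih (k := k + 2) (by lia) (by lia)
    rw [h_coeff] at h_add_two ⊢
    exact hb.sub_mul_nonpos_of_add_two h_pos h_add_two

end IsHurwitz

lemma exists_filter_aroots_eq_singleton_ofReal {P : ℝ[X]}
    (h : ((P.aroots ℂ).filter fun z ↦ 0 ≤ z.re).card = 1) :
    ∃ ρ : ℝ, (P.aroots ℂ).filter (fun z ↦ 0 ≤ z.re) = {(ρ : ℂ)} := by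
  obtain ⟨w, hw⟩ := Multiset.card_eq_one.mp h
  have h_mem (z : ℂ) : z ∈ P.aroots ℂ ∧ 0 ≤ z.re ↔ z = w := by
    rw [← Multiset.mem_filter (p := fun z : ℂ ↦ 0 ≤ z.re), hw, Multiset.mem_singleton]
  obtain ⟨hwP, hw_re⟩ := (h_mem w).mpr rfl
  have hw_conj : starRingEnd ℂ w ∈ P.aroots ℂ := by
    rw [mem_aroots, aeval_conj, map_eq_zero]
    exact mem_aroots.mp hwP
  obtain ⟨ρ, rfl⟩ := Complex.conj_eq_iff_real.mp ((h_mem _).mp ⟨hw_conj, hw_re⟩)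
  exact ⟨ρ, hw⟩

theorem exists_eq_X_sub_C_mul_isHurwitz {P : ℝ[X]}
    (h : ((P.aroots ℂ).filter fun z ↦ 0 ≤ z.re).card = 1) :
    ∃ (ρ : ℝ) (q : ℝ[X]), IsHurwitz q ∧ P = (X - C ρ) * q := by
  obtain ⟨ρ, hρ⟩ := exists_filter_aroots_eq_singleton_ofReal h
  obtain ⟨hρP, hρ_re⟩ := Multiset.mem_filter.mp (hρ ▸ Multiset.mem_singleton_self (ρ : ℂ))
  obtain ⟨hP, hρ_root⟩ := mem_aroots.mp hρP
  obtain ⟨q, rfl⟩ : X - C ρ ∣ P := dvd_iff_isRoot.mpr (by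
    simpa using (aeval_algebraMap_eq_zero_iff ℂ ρ P).mp hρ_root)
  refine ⟨ρ, q, fun z hz ↦ ?_, rfl⟩
  by_contra! hz_re
  have hz_mem : z ∈ (q.aroots ℂ).filter fun z ↦ 0 ≤ z.re :=
    Multiset.mem_filter.mpr ⟨mem_aroots.mpr ⟨right_ne_zero_of_mul hP, hz⟩, hz_re⟩
  rw [aroots_mul hP, aroots_X_sub_C, Complex.coe_algebraMap, Multiset.filter_add,
    Multiset.filter_singleton, if_pos hρ_re, add_eq_left] at hρ
  exact Multiset.notMem_zero z (hρ ▸ hz_mem)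

theorem coeff_nonpos_of_card_filter_aroots_eq_one {P : ℝ[X]} (hlead : 0 < P.leadingCoeff)
    (h : ((P.aroots ℂ).filter fun z ↦ 0 ≤ z.re).card = 1) (h1 : P.nextCoeff ≤ 0)
    (h2 : ∀ k, k + 2 = P.natDegree → P.coeff k ≤ 0) {k : ℕ} (hk : k < P.natDegree) :
    P.coeff k ≤ 0 := by
  obtain ⟨ρ, q, hq, rfl⟩ := exists_eq_X_sub_C_mul_isHurwitz h
  rw [leadingCoeff_monic_mul (monic_X_sub_C ρ)] at hlead
  have hdeg : ((X - C ρ) * q).natDegree = q.natDegree + 1 := by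
    rw [natDegree_mul (X_sub_C_ne_zero ρ) (leadingCoeff_ne_zero.mp hlead.ne'), natDegree_X_sub_C,
      add_comm]
  rw [nextCoeff_of_natDegree_pos (by lia), hdeg, Nat.add_sub_cancel] at h1
  exact hq.coeff_X_sub_C_mul_nonpos hlead h1 (fun k hk ↦ h2 k (by lia)) (by lia)

lemma exists_nonneg_matrix_charpoly_eq {K : Type*} [Field K] [LinearOrder K]
    [IsStrictOrderedRing K] {f : K[X]} (hf : f.Monic) (hcoeff : ∀ k < f.natDegree, f.coeff k ≤ 0) :
    ∃ (m : ℕ) (A : Matrix (Fin m) (Fin m) K), (∀ i j, 0 ≤ A i j) ∧ A.charpoly = f := by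
  let pb := AdjoinRoot.powerBasis hf.ne_zero
  have hmin : minpoly K pb.gen = f := AdjoinRoot.minpoly_powerBasis_gen_of_monic hf
  refine ⟨pb.dim, Algebra.leftMulMatrix pb.basis pb.gen, fun i j ↦ ?_, ?_⟩
  · rw [PowerBasis.leftMulMatrix, Matrix.of_apply, PowerBasis.minpolyGen_eq, hmin]
    have : f.coeff i ≤ 0 := hcoeff i i.isLt
    split_ifs <;> linarith
  · rw [charpoly_leftMulMatrix, hmin]

theorem realizable_aroots_of_coeff_nonpos {f : ℝ[X]} (hlead : 0 < f.leadingCoeff)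
    (hcoeff : ∀ k < f.natDegree, f.coeff k ≤ 0) : Realizable (f.aroots ℂ) := by
  have hinv : f.leadingCoeff⁻¹ ≠ 0 := inv_ne_zero hlead.ne'
  have hmonic : (C f.leadingCoeff⁻¹ * f).Monic :=
    monic_C_mul_of_mul_leadingCoeff_eq_one (inv_mul_cancel₀ hlead.ne')
  obtain ⟨m, A, hA, hAf⟩ := exists_nonneg_matrix_charpoly_eq hmonic fun k hk ↦ by
    rw [natDegree_C_mul hinv] at hk
    rw [coeff_C_mul]
    exact mul_nonpos_of_nonneg_of_nonpos (inv_nonneg.mpr hlead.le) (hcoeff k hk)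
  refine ⟨m, A, hA, ?_⟩
  rw [hAf, ← aroots_C_mul f hinv, aroots_def]

theorem realizable_aroots_derivative_of_coeff_nonpos {f : ℝ[X]} (hlead : 0 < f.leadingCoeff)
    (hdeg : f.natDegree ≠ 0) (hcoeff : ∀ k < f.natDegree, f.coeff k ≤ 0) :
    Realizable (f.derivative.aroots ℂ) := by
  refine realizable_aroots_of_coeff_nonpos ?_ fun k hk ↦ ?_
  · rw [leadingCoeff_derivative]
    exact mul_pos hlead (Nat.cast_pos.mpr hdeg.bot_lt)
  · rw [natDegree_derivative] at hk
    rw [coeff_derivative]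
    exact mul_nonpos_of_nonpos_of_nonneg (hcoeff _ (by lia)) (by positivity)

lemma charpoly_coeff_nonpos_of_trace_eq_zero {ι R : Type*} [Fintype ι] [DecidableEq ι]
    [CommRing R] [LinearOrder R] [IsStrictOrderedRing R] {A : Matrix ι ι R}
    (hA : ∀ i j, 0 ≤ A i j) (htrace : A.trace = 0) {k : ℕ} (hk : k + 2 = Fintype.card ι) :
    A.charpoly.coeff k ≤ 0 := by
  have hdiag (i : ι) : A i i = 0 :=
    (Finset.sum_eq_zero_iff_of_nonneg fun i _ ↦ hA i i).mp htrace i (Finset.mem_univ i)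
  rw [show k = Fintype.card ι - 2 by lia, A.charpoly_coeff_eq_sum_minors 2 (by lia), neg_one_sq,
    one_mul]
  refine Finset.sum_nonpos fun s hs ↦ ?_
  let e := Finset.equivFinOfCardEq (Finset.mem_powersetCard.mp hs).2
  rw [← Matrix.det_submatrix_equiv_self e.symm, Matrix.det_fin_two]
  simp only [Matrix.submatrix_apply, hdiag, zero_mul, zero_sub, neg_nonpos]
  exact mul_nonneg (hA _ _) (hA _ _)

lemma coeff_eq_leadingCoeff_mul_re_esymm_two_aroots (P : ℝ[X]) {k : ℕ}
    (hk : k + 2 = P.natDegree) :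
    P.coeff k = P.leadingCoeff * ((P.aroots ℂ).esymm 2).re := by
  have h := coeff_eq_esymm_roots_of_splits (IsAlgClosed.splits (P.map (algebraMap ℝ ℂ)))
    (k := k) (by rw [natDegree_map]; lia)
  rw [natDegree_map, leadingCoeff_map, coeff_map, ← hk, Nat.add_sub_cancel_left] at h
  simpa using congrArg Complex.re h

lemma sum_aroots_charpoly {ι : Type*} [Fintype ι] [DecidableEq ι] (A : Matrix ι ι ℝ) :
    (A.charpoly.aroots ℂ).sum = A.trace := by
  rw [aroots_def, ← Matrix.charpoly_map, ← Matrix.trace_eq_sum_roots_charpoly]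
  exact (AddMonoidHom.map_trace (algebraMap ℝ ℂ) A).symm

theorem Realizable.re_esymm_two_nonpos {Λ : Multiset ℂ} (hreal : Realizable Λ)
    (hsum : Λ.sum = 0) : (Λ.esymm 2).re ≤ 0 := by
  obtain ⟨m, A, hA, rfl⟩ := hreal
  rw [← aroots_def] at hsum ⊢
  have htrace : A.trace = 0 := by exact_mod_cast (sum_aroots_charpoly A).symm.trans hsum
  have hdeg : A.charpoly.natDegree = m := by simp
  obtain hm | ⟨k, rfl⟩ := (lt_or_ge m 2).imp_right Nat.exists_eq_add_of_le'
  · have hcard : (A.charpoly.aroots ℂ).card < 2 := by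
      rwa [IsAlgClosed.card_aroots_eq_natDegree, hdeg]
    simp [Multiset.esymm, Multiset.powersetCard_eq_empty 2 hcard]
  · have h := coeff_eq_leadingCoeff_mul_re_esymm_two_aroots A.charpoly hdeg.symm
    rw [A.charpoly_monic.leadingCoeff, one_mul] at h
    exact h ▸ charpoly_coeff_nonpos_of_trace_eq_zero hA htrace (by simp)

theorem generalized_suleimanova_trace_zero_general {Λ : Multiset ℂ} (hreal : Realizable Λ)
    (hesymm : (Λ.esymm 2).re ≤ 0) (hgs : (Λ.filter fun z => 0 ≤ z.re).card = 1) :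
    Realizable (Λ.map fun l => X - C l).prod.derivative.roots := by
  obtain ⟨m, A, hA, rfl⟩ := hreal
  rw [← (IsAlgClosed.splits _).eq_prod_roots_of_monic (A.charpoly_monic.map _), derivative_map]
  have hlead : 0 < A.charpoly.leadingCoeff := A.charpoly_monic.leadingCoeff ▸ one_pos
  have hdeg : A.charpoly.natDegree ≠ 0 := by
    intro h0
    rw [eq_C_of_natDegree_eq_zero h0, Polynomial.map_C, roots_C] at hgs
    exact zero_ne_one hgs
  have h_next : A.charpoly.nextCoeff ≤ 0 := by
    have : 0 ≤ A.trace := Finset.sum_nonneg fun i _ ↦ hA i i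
    rwa [A.trace_eq_neg_charpoly_nextCoeff, neg_nonneg] at this
  refine realizable_aroots_derivative_of_coeff_nonpos hlead hdeg fun k hk ↦
    coeff_nonpos_of_card_filter_aroots_eq_one hlead hgs h_next (fun k hk ↦ ?_) hk
  rw [coeff_eq_leadingCoeff_mul_re_esymm_two_aroots _ hk]
  exact mul_nonpos_of_nonneg_of_nonpos hlead.le hesymm

/-- if Λ is a realizable generalized Suleĭmanova spectrum (exactly one
element with nonnegative real part) with s₁(Λ) = 0, then the multiset Λ' of
critical points of Λ is realizable. -/
theorem generalized_suleimanova_trace_zero (n : ℕ) (hn : 2 ≤ n)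
    (Λ : Multiset ℂ) (hcard : Λ.card = n)
    (hreal : Realizable Λ)
    (htrace : Λ.sum = 0)
    (hgs : (Λ.filter fun z => 0 ≤ z.re).card = 1)
    (p : Polynomial ℂ) (hp : p = (Λ.map fun l => X - C l).prod) :
    Realizable p.derivative.roots :=
  hp ▸ generalized_suleimanova_trace_zero_general hreal (hreal.re_esymm_two_nonpos htrace) hgs
end

section
/- Let Λ = {λ_1,…,λ_n} ⊂ ℝ (n ≥ 2) with λ_1 ≥ λ_2 ≥ … ≥ λ_n. If (n−1)λ_n + λ_1 ≥ 0, then the multiset Λ' of critical points of Λ is realizable; indeed the d-companion matrix A with entries a_{ij} = (1/n)((n−1)λ_{i+1} + λ_1) for i = j and a_{ij} = (1/n)(λ_1 − λ_{i+1}) for i ≠ j is entrywise nonnegative and has spectrum Λ'. -/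
open Polynomial

/-!
The d-companion matrix of `a, l₁, …, lₘ` is the diagonal matrix of the `lᵢ` plus a matrix of rank
one. By the matrix determinant lemma its characteristic polynomial is
`∏ᵢ (X - lᵢ) - ∑ᵢ uᵢ ∏_{j ≠ i} (X - lⱼ)` with `uᵢ = (a - lᵢ) / (m + 1)`. Writing
`a - lᵢ = (X - lᵢ) - (X - a)`, this becomes the derivative of `(X - a) ∏ᵢ (X - lᵢ)` divided by
`m + 1`.
-/

open Matrix

variable {ι : Type*} [Fintype ι] [DecidableEq ι]

section MatrixDeterminantLemma

variable {R : Type*} [CommRing R]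

lemma cramer_transpose_add_vecMulVec (A : Matrix ι ι R) (u v : ι → R) :
    cramer (A + vecMulVec u v)ᵀ v = cramer Aᵀ v := by
  ext i
  rw [cramer_transpose_apply, cramer_transpose_apply]
  -- Once row `i` is `v`, every other row differs from that of `A` by a multiple of row `i`.
  refine det_eq_of_forall_row_eq_smul_add_const (Function.update u i 0) i (by simp) fun j k => ?_
  obtain rfl | hj := eq_or_ne j i <;> simp [*, vecMulVec_apply]

lemma det_add_vecMulVec_single (A : Matrix ι ι R) (i : ι) (c : R) (v : ι → R) :
    (A + vecMulVec (Pi.single i c) v).det = A.det + c * (A.updateRow i v).det := by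
  have h : A + vecMulVec (Pi.single i c) v = A.updateRow i (A i + c • v) := by
    ext j k
    obtain rfl | hj := eq_or_ne j i <;> simp [*, vecMulVec_apply]
  rw [h, det_updateRow_add, det_updateRow_smul, updateRow_eq_self]

theorem det_add_vecMulVec (A : Matrix ι ι R) (u v : ι → R) :
    (A + vecMulVec u v).det = A.det + v ⬝ᵥ A.adjugate *ᵥ u := by
  -- In this form the correction is additive in `u`, so it suffices to treat one row at a time.
  suffices h : ∀ A : Matrix ι ι R, (A + vecMulVec u v).det = A.det + u ⬝ᵥ cramer Aᵀ v by
    rw [h, cramer_eq_adjugate_mulVec, ← adjugate_transpose, mulVec_transpose, dotProduct_comm,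
      dotProduct_mulVec]
  induction u using Pi.single_induction with
  | zero => simp
  | single i c => simp [det_add_vecMulVec_single, cramer_transpose_apply]
  | add u w hu hw =>
    intro A
    rw [add_vecMulVec, ← add_assoc, hw, hu, cramer_transpose_add_vecMulVec, add_dotProduct,
      add_assoc]

theorem det_diagonal_add_vecMulVec (d u v : ι → R) :
    (diagonal d + vecMulVec u v).det =
      ∏ i, d i + ∑ i, u i * v i * ∏ j ∈ Finset.univ.erase i, d j := by
  rw [det_add_vecMulVec, det_diagonal, adjugate_diagonal, dotProduct]
  simp only [mulVec_diagonal]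
  congr! 2 with i
  ring

theorem charpoly_diagonal_add_vecMulVec (d u v : ι → R) :
    (diagonal d + vecMulVec u v).charpoly =
      ∏ i, (X - C (d i)) - ∑ i, C (u i * v i) * ∏ j ∈ Finset.univ.erase i, (X - C (d j)) := by
  have h : charmatrix (diagonal d + vecMulVec u v) =
      diagonal (fun i => X - C (d i)) + vecMulVec (fun i => -C (u i)) (fun i => C (v i)) := by
    ext1 i j
    obtain rfl | hij := eq_or_ne i j
    · simp only [charmatrix_apply_eq, Matrix.add_apply, diagonal_apply_eq, vecMulVec_apply,
        C_add, C_mul]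
      ring
    · simp [hij, vecMulVec_apply]
  rw [charpoly, h, det_diagonal_add_vecMulVec]
  simp [sub_eq_add_neg]

end MatrixDeterminantLemma

section DCompanion

variable {K : Type*} [Field K]

/-- The d-companion matrix of the multiset consisting of `a` and the `l i`, whose characteristic
polynomial has the critical points of that multiset as roots. The element `a` set apart is `λ₁`,
and `l i` stands for `λ_{i+1}`, so that `n` is `Fintype.card ι + 1`; this must be nonzero in `K`,
since otherwise the division makes the matrix `diagonal l`. -/
def dCompanion (a : K) (l : ι → K) : Matrix ι ι K :=
  diagonal l + vecMulVec (fun i => (a - l i) / (Fintype.card ι + 1)) 1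

lemma dCompanion_apply_self (h : (Fintype.card ι + 1 : K) ≠ 0) (a : K) (l : ι → K) (i : ι) :
    dCompanion a l i i = (Fintype.card ι * l i + a) / (Fintype.card ι + 1) := by
  simp only [dCompanion, Matrix.add_apply, diagonal_apply_eq, vecMulVec_apply, Pi.one_apply,
    mul_one]
  field_simp
  ring

lemma dCompanion_apply_of_ne (a : K) (l : ι → K) {i j : ι} (hij : i ≠ j) :
    dCompanion a l i j = (a - l i) / (Fintype.card ι + 1) := by
  simp [dCompanion, hij]

lemma map_dCompanion {L : Type*} [Field L] (f : K →+* L) (a : K) (l : ι → K) :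
    (dCompanion a l).map f = dCompanion (f a) (fun i => f (l i)) := by
  ext i j
  simp [dCompanion, diagonal_apply, apply_ite f]

theorem C_mul_charpoly_dCompanion (h : (Fintype.card ι + 1 : K) ≠ 0) (a : K) (l : ι → K) :
    C (Fintype.card ι + 1 : K) * (dCompanion a l).charpoly =
      derivative ((X - C a) * ∏ i, (X - C (l i))) := by
  have hterm (i : ι) :
      C (Fintype.card ι + 1 : K) * (C ((a - l i) / (Fintype.card ι + 1)) *
          ∏ j ∈ Finset.univ.erase i, (X - C (l j))) =
        ∏ j, (X - C (l j)) - (X - C a) * ∏ j ∈ Finset.univ.erase i, (X - C (l j)) := by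
    rw [← mul_assoc, ← C_mul, mul_div_cancel₀ _ h, C_sub,
      ← Finset.mul_prod_erase _ (fun j => X - C (l j)) (Finset.mem_univ i)]
    ring
  calc
    C (Fintype.card ι + 1 : K) * (dCompanion a l).charpoly
    _ = C (Fintype.card ι + 1 : K) * ∏ i, (X - C (l i)) -
          ∑ i, (∏ j, (X - C (l j)) - (X - C a) * ∏ j ∈ Finset.univ.erase i, (X - C (l j))) := by
      simp only [dCompanion, charpoly_diagonal_add_vecMulVec, Pi.one_apply, mul_one, mul_sub (C _),
        Finset.mul_sum, hterm]
    _ = ∏ i, (X - C (l i)) + (X - C a) * ∑ i, ∏ j ∈ Finset.univ.erase i, (X - C (l j)) := by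
      rw [Finset.sum_sub_distrib, ← Finset.mul_sum, Finset.sum_const, Finset.card_univ,
        nsmul_eq_mul, C_add, C_1, map_natCast]
      ring
    _ = derivative ((X - C a) * ∏ i, (X - C (l i))) := by
      simp [derivative_mul, derivative_prod_finset]

theorem roots_charpoly_dCompanion (h : (Fintype.card ι + 1 : K) ≠ 0) (a : K) (l : ι → K) :
    (dCompanion a l).charpoly.roots = (derivative ((X - C a) * ∏ i, (X - C (l i)))).roots := by
  rw [← C_mul_charpoly_dCompanion h, roots_C_mul _ h]

theorem dCompanion_nonneg [LinearOrder K] [IsStrictOrderedRing K] {a : K} {l : ι → K}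
    (hle : ∀ i, l i ≤ a) (hineq : ∀ i, 0 ≤ Fintype.card ι * l i + a) (i j : ι) :
    0 ≤ dCompanion a l i j := by
  obtain rfl | hij := eq_or_ne i j
  · rw [dCompanion_apply_self (Nat.cast_add_one_ne_zero _)]
    exact div_nonneg (hineq i) (by positivity)
  · rw [dCompanion_apply_of_ne a l hij]
    exact div_nonneg (sub_nonneg.2 (hle i)) (by positivity)

end DCompanion

lemma realizable_roots_charpoly {A : Matrix ι ι ℝ} (hA : ∀ i j, 0 ≤ A i j) :
    Realizable (A.map (algebraMap ℝ ℂ)).charpoly.roots :=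
  let e := Fintype.equivFin ι
  ⟨Fintype.card ι, reindex e e A, fun i j => hA (e.symm i) (e.symm j), by
    rw [charpoly_reindex, charpoly_map]⟩

theorem d_companion_nonneg_realizable_general {a : ℝ} {l : ι → ℝ} (hle : ∀ i, l i ≤ a)
    (hineq : ∀ i, 0 ≤ Fintype.card ι * l i + a) :
    (∀ i j, 0 ≤ dCompanion a l i j) ∧
    ((dCompanion a l).map (algebraMap ℝ ℂ)).charpoly.roots =
      (derivative ((X - C (a : ℂ)) * ∏ i, (X - C (l i : ℂ)))).roots ∧
    Realizable (derivative ((X - C (a : ℂ)) * ∏ i, (X - C (l i : ℂ)))).roots := by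
  have hnonneg := dCompanion_nonneg hle hineq
  have hroots : ((dCompanion a l).map (algebraMap ℝ ℂ)).charpoly.roots =
      (derivative ((X - C (a : ℂ)) * ∏ i, (X - C (l i : ℂ)))).roots := by
    rw [map_dCompanion]
    exact roots_charpoly_dCompanion (Nat.cast_add_one_ne_zero _) _ _
  exact ⟨hnonneg, hroots, hroots ▸ realizable_roots_charpoly hnonneg⟩

lemma dCompanion_fin_succ {m : ℕ} (lam : Fin (m + 1) → ℝ) :
    dCompanion (lam 0) (fun i : Fin m => lam i.succ) = Matrix.of fun i j : Fin m =>
      if i = j then (((m + 1 : ℕ) - 1 : ℝ) * lam i.succ + lam 0) / (m + 1 : ℕ)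
      else (lam 0 - lam i.succ) / (m + 1 : ℕ) := by
  ext i j
  obtain rfl | hij := eq_or_ne i j
  · simp [dCompanion_apply_self (Nat.cast_add_one_ne_zero (R := ℝ) _)]
  · simp [dCompanion_apply_of_ne _ _ hij, hij]

/-- if λ₁ ≥ … ≥ λₙ are real and (n-1)λₙ + λ₁ ≥ 0, then the
d-companion matrix A, with a_{ij} = ((n-1)λ_{i+1} + λ₁)/n for i = j and
a_{ij} = (λ₁ - λ_{i+1})/n for i ≠ j, is entrywise nonnegative and its spectrum is
the multiset Λ' of critical points of Λ; hence Λ' is realizable. -/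
theorem d_companion_nonneg_realizable (n : ℕ) (hn : 2 ≤ n)
    (lam : Fin n → ℝ) (hlam : Antitone lam)
    (hineq : 0 ≤ ((n : ℝ) - 1) * lam ⟨n - 1, by omega⟩ + lam ⟨0, by omega⟩)
    (p : Polynomial ℂ) (hp : p = ∏ i, (X - C ((lam i : ℂ))))
    (A : Matrix (Fin (n - 1)) (Fin (n - 1)) ℝ)
    (hA : A = Matrix.of fun i j : Fin (n - 1) =>
      if i = j then
        (((n : ℝ) - 1) * lam ⟨(i : ℕ) + 1, by have := i.isLt; omega⟩
          + lam ⟨0, by omega⟩) / n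
      else (lam ⟨0, by omega⟩ - lam ⟨(i : ℕ) + 1, by have := i.isLt; omega⟩) / n) :
    (∀ i j, 0 ≤ A i j) ∧
    ((A.map (algebraMap ℝ ℂ)).charpoly.roots = p.derivative.roots) ∧
    Realizable p.derivative.roots := by
  obtain ⟨m, rfl⟩ : ∃ m, n = m + 1 := ⟨n - 1, by omega⟩
  have hA' : A = dCompanion (lam 0) (fun i : Fin m => lam i.succ) :=
    hA.trans (dCompanion_fin_succ lam).symm
  have hle (i : Fin m) : lam i.succ ≤ lam 0 := hlam (Fin.zero_le _)
  have hdiag (i : Fin m) : 0 ≤ (Fintype.card (Fin m) : ℝ) * lam i.succ + lam 0 :=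
    calc
      0 ≤ (m : ℝ) * lam (Fin.last m) + lam 0 := by simpa using! hineq
      _ ≤ (m : ℝ) * lam i.succ + lam 0 := by gcongr; exact hlam (Fin.le_last _)
      _ = _ := by rw [Fintype.card_fin]
  rw [hp, Fin.prod_univ_succ, hA']
  exact d_companion_nonneg_realizable_general hle hdiag
end

section
/- Let Λ = {λ_1,…,λ_n} ⊂ ℝ (n ≥ 2) be a Ciarlet spectrum, i.e., λ_1 ≥ λ_2 ≥ … ≥ λ_n and nλ_n + λ_1 ≥ 0. Then the multiset Λ' of critical points of Λ is realizable. -/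
open Polynomial

/-!
Let `p` be real-rooted of degree `n`, with a root `a` and all roots at least `b`, and put
`c = ((n - 1) * a + b) / n`. Some critical point is at least `c`: by Rolle's theorem if another root
is, and otherwise because `p' / p = ∑ 1 / (c - x) ≥ 1 / (c - a) + (n - 1) / (c - b) = 0` at `c`, so
that `|p|` does not decrease at `c` although it vanishes at `a`. The other `n - 2` critical points
are at least `b`, so if `(n - 1) * b + a ≥ 0`, this one outweighs their negative parts. A list whose
first entry outweighs the negative parts of the others is the spectrum of a nonnegative matrix,
obtained from a block triangular one by conjugating with a shear.
-/

section Realizability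

open Matrix

theorem charpoly_fromBlocks_shear {R m n : Type*} [CommRing R] [Fintype m] [Fintype n]
    [DecidableEq m] [DecidableEq n] (A : Matrix m m R) (B : Matrix m n R) (D : Matrix n n R)
    (E : Matrix n m R) :
    (fromBlocks (A - B * E) B (E * (A - B * E) - D * E) (E * B + D)).charpoly =
      A.charpoly * D.charpoly := by
  let S : Matrix (m ⊕ n) (m ⊕ n) R := fromBlocks 1 0 E 1
  let S' : Matrix (m ⊕ n) (m ⊕ n) R := fromBlocks 1 0 (-E) 1
  have inv_mul : S' * S = 1 := by simp [S, S', fromBlocks_multiply]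
  have conj : fromBlocks (A - B * E) B (E * (A - B * E) - D * E) (E * B + D) =
      S * (fromBlocks A B 0 D * S') := by
    simp only [S, S', fromBlocks_multiply]
    congr 1 <;> simp [sub_eq_add_neg, Matrix.mul_add]
  rw [conj, charpoly_mul_comm, Matrix.mul_assoc, inv_mul, Matrix.mul_one,
    charpoly_fromBlocks_zero₂₁]

theorem realizable_map_roots_charpoly {ι : Type*} [Fintype ι] [DecidableEq ι] {A : Matrix ι ι ℝ}
    (hA : ∀ i j, 0 ≤ A i j) (hsplits : A.charpoly.Splits) :
    Realizable (A.charpoly.roots.map (algebraMap ℝ ℂ)) := by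
  let e := Fintype.equivFin ι
  refine ⟨_, reindex e e A, fun i j => hA _ _, ?_⟩
  rw [charpoly_reindex, hsplits.roots_map]

theorem exists_nonneg_matrix_charpoly_eq_s11 {R ι : Type*} [CommRing R] [LinearOrder R]
    [IsStrictOrderedRing R] [Fintype ι] [DecidableEq ι] {a : R} {v : ι → R}
    (h : ∑ i, (v i)⁻ ≤ a) :
    ∃ M : Matrix (Unit ⊕ ι) (Unit ⊕ ι) R,
      (∀ i j, 0 ≤ M i j) ∧ M.charpoly = (X - C a) * ∏ i, (X - C (v i)) := by
  let A : Matrix Unit Unit R := diagonal fun _ => a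
  let B : Matrix Unit ι R := of fun _ i => (v i)⁻
  -- Shearing only along the negative eigenvalues: a positive one may exceed the slack `a - ∑ vᵢ⁻`.
  let E : Matrix ι Unit R := of fun i _ => if v i < 0 then 1 else 0
  have BE_apply (i j) : (B * E) i j = ∑ k, (v k)⁻ := by
    rw [mul_apply]
    refine Finset.sum_congr rfl fun k _ => ?_
    rcases lt_or_ge (v k) 0 with hk | hk <;> simp [B, E, hk]
  have slack_nonneg (i j) : 0 ≤ (A - B * E) i j := by
    simpa [A, BE_apply] using h
  refine ⟨fromBlocks (A - B * E) B (E * (A - B * E) - diagonal v * E) (E * B + diagonal v), ?_, ?_⟩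
  · rintro (i | i) (j | j)
    · exact slack_nonneg i j
    · exact negPart_nonneg _
    · have entry : (E * (A - B * E) - diagonal v * E) i j =
          E i () * ((A - B * E) () j - v i) := by
        rw [Matrix.sub_apply, diagonal_mul, mul_apply, Fintype.sum_unique]
        ring
      have := slack_nonneg () j
      rw [fromBlocks_apply₂₁, entry]
      rcases lt_or_ge (v i) 0 with hi | hi
      · exact mul_nonneg (by simp [E, hi]) (by linarith)
      · simp [E, hi.not_gt]
    · have entry : (E * B + diagonal v) i j = E i () * (v j)⁻ + diagonal v i j := by
        rw [Matrix.add_apply, mul_apply, Fintype.sum_unique]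
        rfl
      rw [fromBlocks_apply₂₂, entry]
      rcases eq_or_ne i j with rfl | hij
      · rcases lt_or_ge (v i) 0 with hi | hi
        · simp [E, hi, hi.le]
        · simp [E, hi, hi.not_gt]
      · rw [diagonal_apply_ne _ hij, add_zero]
        refine mul_nonneg ?_ (negPart_nonneg _)
        dsimp [E]
        positivity
  · rw [charpoly_fromBlocks_shear, charpoly_diagonal, charpoly_diagonal, Fintype.prod_unique]

theorem realizable_cons_of_sum_negPart_le {a : ℝ} {s : Multiset ℝ}
    (h : (s.map (·⁻)).sum ≤ a) : Realizable ((a ::ₘ s).map (algebraMap ℝ ℂ)) := by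
  classical
  obtain ⟨M, nonneg, charpoly_eq⟩ := exists_nonneg_matrix_charpoly_eq_s11 (a := a)
    (v := fun x : s => x.1) (by rwa [Finset.sum_eq_multiset_sum, s.map_univ (·⁻)])
  have charpoly_eq_prod : M.charpoly = ((a ::ₘ s).map fun x => X - C x).prod := by
    rw [charpoly_eq, Finset.prod_eq_multiset_prod, s.map_univ fun x => X - C x, Multiset.map_cons,
      Multiset.prod_cons]
  have splits : M.charpoly.Splits :=
    charpoly_eq_prod ▸ Splits.multisetProd (by simp [Splits.X_sub_C])
  simpa only [charpoly_eq_prod, roots_multiset_prod_X_sub_C] using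
    realizable_map_roots_charpoly nonneg splits

end Realizability

theorem sum_negPart_le_card_nsmul {α : Type*} [AddCommGroup α] [LinearOrder α]
    [IsOrderedAddMonoid α] {t : Multiset α} {b : α} (ht : ∀ x ∈ t, b ≤ x) :
    (t.map (·⁻)).sum ≤ t.card • b⁻ := by
  rw [← Multiset.card_map (·⁻) t]
  refine Multiset.sum_le_card_nsmul _ _ fun y hy => ?_
  obtain ⟨x, hx, rfl⟩ := Multiset.mem_map.1 hy
  exact negPart_anti (ht x hx)

section OrderedField

variable {𝕜 : Type*} [Field 𝕜] [LinearOrder 𝕜] [IsStrictOrderedRing 𝕜] {a b c x : 𝕜}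

theorem le_of_isRoot_derivative {p : 𝕜[X]} (hp : p.Splits) (hp' : p.derivative ≠ 0)
    (hb : ∀ y ∈ p.roots, b ≤ y) (hx : p.derivative.IsRoot x) : b ≤ x := by
  by_contra! hxb
  have hp0 : p ≠ 0 := by rintro rfl; simp at hp'
  have hpx : p.eval x ≠ 0 := fun h => (hb x ((mem_roots hp0).2 h)).not_gt hxb
  have roots_ne : p.roots ≠ 0 := by
    intro h
    have := hp.natDegree_eq_card_roots
    exact hp' (derivative_of_natDegree_zero (by simpa [h] using this))
  have sum_neg : (p.roots.map fun y => 1 / (x - y)).sum < 0 := by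
    simpa using Multiset.sum_lt_sum_of_nonempty (g := fun _ => 0) roots_ne fun y hy =>
      one_div_neg.2 (sub_neg.2 (hxb.trans_le (hb y hy)))
  refine mul_ne_zero hpx sum_neg.ne ?_
  rw [← hp.eval_derivative_eq_eval_mul_sum hpx, hx.eq_zero]

theorem sum_one_div_sub_nonneg {t : Multiset 𝕜} (hbc : b < c) (hca : c < a)
    (ht : ∀ x ∈ t, b ≤ x ∧ x < c) (h : c - b ≤ t.card * (a - c)) :
    0 ≤ ((a ::ₘ t).map fun x => 1 / (c - x)).sum := by
  have term_ge : ∀ y ∈ t.map fun x => 1 / (c - x), 1 / (c - b) ≤ y := by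
    intro y hy
    obtain ⟨x, hx, rfl⟩ := Multiset.mem_map.1 hy
    obtain ⟨hbx, hxc⟩ := ht x hx
    exact one_div_le_one_div_of_le (sub_pos.2 hxc) (sub_le_sub_left hbx c)
  have sum_ge := Multiset.card_nsmul_le_sum term_ge
  rw [Multiset.card_map, nsmul_eq_mul, mul_one_div] at sum_ge
  have pole_le : 1 / (a - c) ≤ t.card / (c - b) := by
    rwa [div_le_div_iff₀ (sub_pos.2 hca) (sub_pos.2 hbc), one_mul]
  have pole_eq : 1 / (c - a) = -(1 / (a - c)) := by rw [← neg_sub a c, one_div_neg_eq_neg_one_div]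
  rw [Multiset.map_cons, Multiset.sum_cons, pole_eq]
  linarith

end OrderedField

section Real

variable {p : ℝ[X]} {a b c x : ℝ}

theorem splits_derivative_of_splits (hp : p.Splits) : p.derivative.Splits := by
  rw [splits_iff_card_roots]
  have := card_roots_le_derivative p
  have := card_roots' p.derivative
  have := natDegree_derivative p
  have := hp.natDegree_eq_card_roots
  rcases eq_or_ne p.natDegree 0 <;> omega

theorem exists_isRoot_derivative_mem_Icc (hca : c < a) (ha : p.IsRoot a)
    (hc : 0 ≤ p.eval c * p.derivative.eval c) : ∃ z ∈ Set.Icc c a, p.derivative.IsRoot z := by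
  obtain ⟨ξ, hξ, slope⟩ := exists_hasDerivAt_eq_slope p.eval p.derivative.eval hca
    p.continuousOn fun x _ => p.hasDerivAt x
  have sign_change : p.derivative.eval c * p.derivative.eval ξ ≤ 0 := by
    have : p.derivative.eval c * p.derivative.eval ξ =
        -(p.eval c * p.derivative.eval c) / (a - c) := by
      rw [slope, ha.eq_zero]; ring
    rw [this]
    exact div_nonpos_of_nonpos_of_nonneg (neg_nonpos.2 hc) (sub_nonneg.2 hca.le)
  have zero_mem : (0 : ℝ) ∈ Set.uIcc (p.derivative.eval c) (p.derivative.eval ξ) := by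
    rw [Set.mem_uIcc]
    rcases mul_nonpos_iff.1 sign_change with h | h <;> tauto
  obtain ⟨z, hz, hpz⟩ := intermediate_value_uIcc p.derivative.continuousOn zero_mem
  rw [Set.uIcc_of_le hξ.1.le] at hz
  exact ⟨z, ⟨hz.1, hz.2.trans hξ.2.le⟩, hpz⟩

theorem exists_isRoot_derivative_mem_uIcc (ha : a ∈ p.roots) (hx : x ∈ p.roots.erase a) :
    ∃ z ∈ Set.uIcc a x, p.derivative.IsRoot z := by
  have hp0 := (mem_roots'.1 ha).1
  rcases eq_or_ne x a with rfl | hxa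
  · have : 1 < p.rootMultiplicity x := by
      rw [← count_roots, ← Multiset.cons_erase ha, Multiset.count_cons_self]
      exact Nat.lt_add_of_pos_left (Multiset.count_pos.2 hx)
    exact ⟨x, Set.left_mem_uIcc, ((one_lt_rootMultiplicity_iff_isRoot hp0).1 this).2⟩
  · have hpa := isRoot_of_mem_roots ha
    have hpx := isRoot_of_mem_roots (Multiset.mem_of_mem_erase hx)
    rcases hxa.lt_or_gt with h | h
    · rw [Set.uIcc_of_ge h.le]
      exact exists_isRoot_derivative_mem_Icc h hpa (by simp [hpx.eq_zero])
    · rw [Set.uIcc_of_le h.le]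
      exact exists_isRoot_derivative_mem_Icc h hpx (by simp [hpa.eq_zero])

theorem exists_isRoot_derivative_mem_Icc_of_forall_lt {t : Multiset ℝ} (hp : p.Splits)
    (hroots : p.roots = a ::ₘ t) (hbc : b < c) (ht : ∀ x ∈ t, b ≤ x ∧ x < c)
    (h : c - b ≤ t.card * (a - c)) : ∃ z ∈ Set.Icc c a, p.derivative.IsRoot z := by
  have hca : c < a := sub_pos.1 <|
    pos_of_mul_pos_right ((sub_pos.2 hbc).trans_le h) (Nat.cast_nonneg _)
  have ha : a ∈ p.roots := hroots ▸ Multiset.mem_cons_self a t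
  have hpc : p.eval c ≠ 0 := by
    intro hc
    have hmem : c ∈ p.roots := mem_roots'.2 ⟨(mem_roots'.1 ha).1, hc⟩
    rw [hroots, Multiset.mem_cons] at hmem
    exact hmem.elim hca.ne fun hct => (ht c hct).2.false
  refine exists_isRoot_derivative_mem_Icc hca (isRoot_of_mem_roots ha) ?_
  rw [hp.eval_derivative_eq_eval_mul_sum hpc, ← mul_assoc, hroots]
  exact mul_nonneg (mul_self_nonneg _) (sum_one_div_sub_nonneg hbc hca ht h)

theorem exists_isRoot_derivative_ge (hp : p.Splits) (hdeg : 2 ≤ p.natDegree) (ha : a ∈ p.roots)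
    (hb : ∀ x ∈ p.roots, b ≤ x) :
    ∃ μ, p.derivative.IsRoot μ ∧ (p.natDegree - 1) * a + b ≤ p.natDegree * μ := by
  obtain ⟨t, ht⟩ := Multiset.exists_cons_of_mem ha
  have erase_eq : p.roots.erase a = t := by rw [ht, Multiset.erase_cons_head]
  have card_t : p.natDegree = t.card + 1 := by
    rw [hp.natDegree_eq_card_roots, ht, Multiset.card_cons]
  have card_pos : (0 : ℝ) < t.card + 1 := by positivity
  obtain ⟨c, hc⟩ : ∃ c, (t.card + 1) * c = t.card * a + b :=
    ⟨(t.card * a + b) / (t.card + 1), by field_simp⟩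
  simp only [card_t, Nat.cast_add_one, add_sub_cancel_right, ← hc, mul_le_mul_iff_right₀ card_pos]
  have c_le_a : c ≤ a := by nlinarith [hb a ha]
  by_cases hroot : ∃ x ∈ t, c ≤ x
  · obtain ⟨x, hx, hcx⟩ := hroot
    obtain ⟨μ, hμ, hpμ⟩ := exists_isRoot_derivative_mem_uIcc ha (erase_eq ▸ hx)
    exact ⟨μ, hpμ, (le_inf c_le_a hcx).trans hμ.1⟩
  push Not at hroot
  have ht_bounds : ∀ x ∈ t, b ≤ x ∧ x < c := fun x hx =>
    ⟨hb x (ht ▸ Multiset.mem_cons_of_mem hx), hroot x hx⟩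
  obtain ⟨y, hy⟩ : ∃ y, y ∈ t := Multiset.card_pos_iff_exists_mem.1 (by omega)
  have b_lt_c : b < c := (ht_bounds y hy).1.trans_lt (ht_bounds y hy).2
  obtain ⟨μ, hμ, hpμ⟩ :=
    exists_isRoot_derivative_mem_Icc_of_forall_lt hp ht b_lt_c ht_bounds (by linarith)
  exact ⟨μ, hpμ, hμ.1⟩

end Real

theorem realizable_roots_derivative_of_splits {p : ℝ[X]} {a b : ℝ} (hp : p.Splits)
    (hdeg : 2 ≤ p.natDegree) (ha : a ∈ p.roots) (hb : ∀ x ∈ p.roots, b ≤ x)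
    (h : 0 ≤ (p.natDegree - 1) * b + a) :
    Realizable (p.map (algebraMap ℝ ℂ)).derivative.roots := by
  have hp'0 : p.derivative ≠ 0 := fun h0 => by
    have := natDegree_derivative p
    rw [h0, natDegree_zero] at this
    omega
  have hp' := splits_derivative_of_splits hp
  obtain ⟨μ, hμ, le_μ⟩ := exists_isRoot_derivative_ge hp hdeg ha hb
  obtain ⟨t, ht⟩ := Multiset.exists_cons_of_mem ((mem_roots hp'0).2 hμ)
  have natDegree_eq : p.natDegree = t.card + 2 := by
    have := natDegree_derivative p
    rw [hp'.natDegree_eq_card_roots, ht, Multiset.card_cons] at this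
    omega
  have le_t : ∀ x ∈ t, b ≤ x := fun x hx => le_of_isRoot_derivative hp hp'0 hb <|
    isRoot_of_mem_roots <| ht ▸ Multiset.mem_cons_of_mem hx
  rw [derivative_map, hp'.roots_map, ht]
  refine realizable_cons_of_sum_negPart_le ((sum_negPart_le_card_nsmul le_t).trans ?_)
  rw [nsmul_eq_mul]
  simp only [natDegree_eq, Nat.cast_add, Nat.cast_ofNat] at le_μ h
  suffices (t.card + 2) * (t.card * b⁻) ≤ (t.card + 1) * a + b by
    refine le_of_mul_le_mul_left (this.trans ?_) (by positivity : (0 : ℝ) < t.card + 2)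
    linarith
  rcases le_total 0 b with hb0 | hb0
  · have : 0 ≤ (t.card + 1) * a := mul_nonneg (by positivity) (hb0.trans (hb a ha))
    rw [negPart_of_nonneg hb0]
    linarith
  · have : 0 ≤ ((t.card : ℝ) + 1) * ((t.card + 1) * b + a) :=
      mul_nonneg (by positivity) (by linarith)
    rw [negPart_of_nonpos hb0]
    linarith

theorem critical_points_of_ciarlet_realizable_general {ι : Type*} [Fintype ι] [Nontrivial ι]
    (lam : ι → ℝ) (i j : ι) (hj : ∀ k, lam j ≤ lam k)
    (h : 0 ≤ ((Fintype.card ι : ℝ) - 1) * lam j + lam i)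
    (p : Polynomial ℂ) (hp : p = ∏ k, (X - C ((lam k : ℂ)))) :
    Realizable p.derivative.roots := by
  have p_eq_map : p = (∏ k, (X - C (lam k))).map (algebraMap ℝ ℂ) := by
    simp [hp, Polynomial.map_prod]
  have splits : (∏ k, (X - C (lam k))).Splits := Splits.prod fun k _ => Splits.X_sub_C _
  have natDegree_eq : (∏ k, (X - C (lam k))).natDegree = Fintype.card ι := by simp
  have roots_eq : (∏ k, (X - C (lam k))).roots = Finset.univ.val.map lam := by
    simpa [Multiset.map_map] using! roots_multiset_prod_X_sub_C (Finset.univ.val.map lam)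
  rw [p_eq_map]
  refine realizable_roots_derivative_of_splits (a := lam i) (b := lam j) splits ?_ ?_ ?_ ?_
  · exact natDegree_eq ▸ Fintype.one_lt_card
  · simp [roots_eq]
  · simpa [roots_eq] using hj
  · rwa [natDegree_eq]

/-- the critical points of a Ciarlet spectrum (a real list
λ₁ ≥ … ≥ λₙ with nλₙ + λ₁ ≥ 0) are realizable. -/
theorem critical_points_of_ciarlet_realizable (n : ℕ) (hn : 2 ≤ n)
    (lam : Fin n → ℝ) (hlam : Antitone lam)
    (hciarlet : 0 ≤ (n : ℝ) * lam ⟨n - 1, by omega⟩ + lam ⟨0, by omega⟩)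
    (p : Polynomial ℂ) (hp : p = ∏ i, (X - C ((lam i : ℂ)))) :
    Realizable p.derivative.roots := by
  have : Nontrivial (Fin n) := Fin.nontrivial_iff_two_le.2 hn
  have last_le (k : Fin n) : lam ⟨n - 1, by omega⟩ ≤ lam k := hlam (Nat.le_sub_one_of_lt k.isLt)
  refine critical_points_of_ciarlet_realizable_general lam ⟨0, by omega⟩ ⟨n - 1, by omega⟩
    last_le ?_ p hp
  rw [Fintype.card_fin]
  rcases le_total 0 (lam ⟨n - 1, by omega⟩) with h | h
  · have one_le : (1 : ℝ) ≤ n := by exact_mod_cast one_le_two.trans hn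
    exact add_nonneg (mul_nonneg (sub_nonneg.2 one_le) h) (h.trans (last_le _))
  · linarith
end

section
/- Let Λ = {λ_1,…,λ_n} (n ≥ 2) be a finite multiset of complex numbers and let H ∈ M_n(ℂ) be a complex Hadamard matrix. If A = U D U* is entrywise nonnegative (in particular real), where U = (1/√n)H and D = diag(λ_1,…,λ_n), then for every i ∈ {1,…,n} the principal submatrix A_{(i)} is an entrywise nonnegative matrix whose multiset of eigenvalues (with multiplicity) is the multiset Λ' of critical points of Λ; hence Λ' is realizable. -/
/-!
The characteristic polynomial of the principal submatrix `A_(i)` is the `(i, i)` entry of the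
adjugate of `X - A`. When `A = P * diagonal lam * P⁻¹`, this adjugate is diagonalised by `P` as
well, with diagonal entries `∏ k ≠ j, (X - lam k)`, so its `(i, i)` entry is a combination of these
products with weights `P i j * P⁻¹ j i`. If `P` is a complex Hadamard matrix of order `n`, then
`P⁻¹ = Pᴴ / n` and all the weights equal `1 / n`; the combination is then `p' / n` by the product
rule.
-/

open Polynomial Matrix

/-- The embedding Fin (n-1) → Fin n skipping index i. -/
def delIdx {n : ℕ} (i : Fin n) (j : Fin (n - 1)) : Fin n :=
  if h : (j : ℕ) < (i : ℕ) then ⟨j, by have := i.isLt; omega⟩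
  else ⟨(j : ℕ) + 1, by have := j.isLt; have := i.isLt; omega⟩

/-- The principal submatrix of A obtained by deleting the i-th row and column. -/
def delSub {n : ℕ} {R : Type*} (A : Matrix (Fin n) (Fin n) R) (i : Fin n) :
    Matrix (Fin (n - 1)) (Fin (n - 1)) R :=
  A.submatrix (delIdx i) (delIdx i)

section Conjugation

variable {ι R : Type*} [Fintype ι] [DecidableEq ι] [CommRing R] {P Q : Matrix ι ι R}

theorem adjugate_eq_det_smul_of_mul_eq_one (h : P * Q = 1) : P.adjugate = P.det • Q := by
  calc P.adjugate = P.adjugate * P * Q := by rw [mul_assoc, h, mul_one]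
    _ = P.det • Q := by rw [adjugate_mul, Matrix.smul_mul, one_mul]

theorem adjugate_conj_of_mul_eq_one (h : P * Q = 1) (M : Matrix ι ι R) :
    (P * M * Q).adjugate = P * M.adjugate * Q := by
  have h' : Q * P = 1 := mul_eq_one_comm.mp h
  have hdet : P.det * Q.det = 1 := by rw [← det_mul, h, det_one]
  calc (P * M * Q).adjugate = (Q.det • P) * (M.adjugate * (P.det • Q)) := by
        rw [adjugate_mul_distrib, adjugate_mul_distrib, adjugate_eq_det_smul_of_mul_eq_one h,
          adjugate_eq_det_smul_of_mul_eq_one h']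
    _ = P * M.adjugate * Q := by
        rw [Matrix.mul_smul, Matrix.mul_smul, Matrix.smul_mul, smul_smul, hdet, one_smul, mul_assoc]

theorem map_C_mul_map_C_of_mul_eq_one (h : P * Q = 1) : P.map C * Q.map C = 1 := by
  rw [← Matrix.map_mul, h, Matrix.map_one C C_0 C_1]

theorem charmatrix_conj_of_mul_eq_one (h : P * Q = 1) (M : Matrix ι ι R) :
    (P * M * Q).charmatrix = P.map C * M.charmatrix * Q.map C := by
  have hX : P.map C * scalar ι (X : R[X]) * Q.map C = scalar ι X := by
    rw [← scalar_comm X (Commute.all X), mul_assoc, map_C_mul_map_C_of_mul_eq_one h, mul_one]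
  simp only [charmatrix, RingHom.mapMatrix_apply, Matrix.map_mul, mul_sub, sub_mul, hX]

theorem adjugate_charmatrix_conj_diagonal_apply (h : P * Q = 1) (d : ι → R) (i k : ι) :
    (P * diagonal d * Q).charmatrix.adjugate i k =
      ∑ j, C (P i j * Q j k) * ∏ l ∈ Finset.univ.erase j, (X - C (d l)) := by
  rw [charmatrix_conj_of_mul_eq_one h,
    adjugate_conj_of_mul_eq_one (map_C_mul_map_C_of_mul_eq_one h), charmatrix_diagonal,
    adjugate_diagonal, mul_apply]
  refine Finset.sum_congr rfl fun j _ => ?_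
  rw [mul_diagonal, map_apply, map_apply, C_mul, mul_right_comm]

theorem adjugate_charmatrix_conj_diagonal_apply_of_forall_eq (h : P * Q = 1) (d : ι → R) {i k : ι}
    {c : R} (hc : ∀ j, P i j * Q j k = c) :
    (P * diagonal d * Q).charmatrix.adjugate i k = C c * (∏ j, (X - C (d j))).derivative := by
  simp only [adjugate_charmatrix_conj_diagonal_apply h, hc, derivative_prod_finset,
    derivative_X_sub_C, mul_one, Finset.mul_sum]

end Conjugation

section PrincipalSubmatrix

variable {R : Type*} [CommRing R]

theorem charmatrix_submatrix_of_injective {ι κ : Type*} [Fintype ι] [DecidableEq ι] [Fintype κ]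
    [DecidableEq κ] (A : Matrix ι ι R) {f : κ → ι} (hf : f.Injective) :
    (A.submatrix f f).charmatrix = A.charmatrix.submatrix f f := by
  ext1 j k
  simp only [charmatrix_apply, submatrix_apply, diagonal_apply, hf.eq_iff]

theorem charpoly_submatrix_succAbove {m : ℕ} (A : Matrix (Fin (m + 1)) (Fin (m + 1)) R)
    (i : Fin (m + 1)) :
    (A.submatrix i.succAbove i.succAbove).charpoly = A.charmatrix.adjugate i i := by
  rw [adjugate_fin_succ_eq_det_submatrix, (Even.add_self (i : ℕ)).neg_one_pow, one_mul, charpoly,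
    charmatrix_submatrix_of_injective A Fin.succAbove_right_injective]

theorem delIdx_eq_succAbove {m : ℕ} (i : Fin (m + 1)) : delIdx i = i.succAbove := by
  funext j
  simp only [delIdx, Fin.succAbove, Fin.lt_def, Fin.val_castSucc]
  rfl

theorem charpoly_delSub {n : ℕ} (A : Matrix (Fin n) (Fin n) R) (i : Fin n) :
    (delSub A i).charpoly = A.charmatrix.adjugate i i := by
  cases n with
  | zero => exact i.elim0
  | succ m => rw [← charpoly_submatrix_succAbove, ← delIdx_eq_succAbove]; rfl

end PrincipalSubmatrix

/-- A complex Hadamard matrix of order `Fintype.card ι`: up to scaling, a unitary matrix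
all of whose entries have the same modulus. It is normalised to have unimodular entries, so no
square root is needed to write its inverse. -/
structure IsComplexHadamard {ι : Type*} [Fintype ι] [DecidableEq ι] (H : Matrix ι ι ℂ) : Prop where
  norm_apply (i j : ι) : ‖H i j‖ = 1
  mul_conjTranspose : H * Hᴴ = (Fintype.card ι : ℂ) • 1

namespace IsComplexHadamard

theorem mul_inv_smul_conjTranspose {ι : Type*} [Fintype ι] [DecidableEq ι] [Nonempty ι]
    {H : Matrix ι ι ℂ} (hH : IsComplexHadamard H) : H * ((Fintype.card ι : ℂ)⁻¹ • Hᴴ) = 1 := by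
  rw [Matrix.mul_smul, hH.mul_conjTranspose,
    inv_smul_smul₀ (Nat.cast_ne_zero.mpr Fintype.card_ne_zero)]

theorem apply_mul_star_apply {ι : Type*} [Fintype ι] [DecidableEq ι]
    {H : Matrix ι ι ℂ} (hH : IsComplexHadamard H) (i j : ι) : H i j * star (H i j) = 1 := by
  rw [Complex.star_def, Complex.mul_conj', hH.norm_apply, Complex.ofReal_one, one_pow]

theorem charpoly_delSub_conj_diagonal {n : ℕ} {H : Matrix (Fin n) (Fin n) ℂ}
    (hH : IsComplexHadamard H) (d : Fin n → ℂ) (i : Fin n) :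
    (delSub (H * diagonal d * ((n : ℂ)⁻¹ • Hᴴ)) i).charpoly =
      C (n : ℂ)⁻¹ * (∏ j, (X - C (d j))).derivative := by
  have : Nonempty (Fin n) := ⟨i⟩
  have hinv : H * ((n : ℂ)⁻¹ • Hᴴ) = 1 := by simpa using hH.mul_inv_smul_conjTranspose
  have hweight (j : Fin n) : H i j * ((n : ℂ)⁻¹ • Hᴴ) j i = (n : ℂ)⁻¹ := by
    rw [Matrix.smul_apply, conjTranspose_apply, mul_smul_comm, hH.apply_mul_star_apply, smul_eq_mul,
      mul_one]
  rw [charpoly_delSub, adjugate_charmatrix_conj_diagonal_apply_of_forall_eq hinv d hweight]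

end IsComplexHadamard

theorem inv_sqrt_smul_mul_mul_conjTranspose {ι κ : Type*} [Fintype κ] {r : ℝ} (hr : 0 ≤ r)
    (H : Matrix ι κ ℂ) (D : Matrix κ κ ℂ) :
    ((√r : ℂ)⁻¹ • H) * D * ((√r : ℂ)⁻¹ • H)ᴴ = H * D * ((r : ℂ)⁻¹ • Hᴴ) := by
  have hsqrt : star (√r : ℂ)⁻¹ * (√r : ℂ)⁻¹ = (r : ℂ)⁻¹ := by
    rw [Complex.star_def, ← Complex.ofReal_inv, Complex.conj_ofReal, ← Complex.ofReal_mul,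
      ← mul_inv, Real.mul_self_sqrt hr, Complex.ofReal_inv]
  rw [conjTranspose_smul, Matrix.smul_mul, Matrix.smul_mul, Matrix.mul_smul, Matrix.mul_smul,
    smul_smul, mul_comm, hsqrt]

theorem realizable_roots_charpoly_s18 {m : ℕ} {A : Matrix (Fin m) (Fin m) ℂ}
    (hA : ∀ i j, (A i j).im = 0 ∧ 0 ≤ (A i j).re) : Realizable A.charpoly.roots := by
  have hre : (A.map Complex.re).map (algebraMap ℝ ℂ) = A := by
    ext1 i j
    exact Complex.ext rfl (hA i j).1.symm
  refine ⟨m, A.map Complex.re, fun i j => (hA i j).2, ?_⟩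
  rw [← charpoly_map, hre]

/-- if H is a complex Hadamard matrix, U = (1/√n)H, and
A = U D U* is entrywise nonnegative (in particular real) with
D = diag(λ₁,…,λₙ), then for every i the principal submatrix A_{(i)} is
entrywise nonnegative and its spectrum (with multiplicity) is the multiset of
critical points of Λ = {λ₁,…,λₙ}; hence the critical points are realizable. -/
theorem hadamard_similarity_critical_points (n : ℕ) (hn : 2 ≤ n)
    (lam : Fin n → ℂ)
    (H : Matrix (Fin n) (Fin n) ℂ)
    (hH1 : ∀ i j, ‖H i j‖ = 1)
    (hH2 : H * Hᴴ = (n : ℂ) • 1)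
    (U : Matrix (Fin n) (Fin n) ℂ) (hU : U = ((Real.sqrt n : ℂ))⁻¹ • H)
    (A : Matrix (Fin n) (Fin n) ℂ)
    (hA : A = U * Matrix.diagonal lam * Uᴴ)
    (hpos : ∀ i j, (A i j).im = 0 ∧ 0 ≤ (A i j).re)
    (p : Polynomial ℂ) (hp : p = ∏ j, (X - C (lam j))) :
    (∀ i : Fin n,
      (∀ j k, ((delSub A i) j k).im = 0 ∧ 0 ≤ ((delSub A i) j k).re) ∧
      (delSub A i).charpoly.roots = p.derivative.roots) ∧
    Realizable p.derivative.roots := by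
  have hH : IsComplexHadamard H := ⟨hH1, by rwa [Fintype.card_fin]⟩
  have : NeZero n := ⟨by omega⟩
  have hroots (i : Fin n) : (delSub A i).charpoly.roots = p.derivative.roots := by
    rw [hA, hU, inv_sqrt_smul_mul_mul_conjTranspose n.cast_nonneg, Complex.ofReal_natCast,
      hH.charpoly_delSub_conj_diagonal, roots_C_mul _ (inv_ne_zero (NeZero.ne (n : ℂ))), hp]
  refine ⟨fun i => ⟨fun j k => hpos _ _, hroots i⟩, ?_⟩
  rw [← hroots 0]
  exact realizable_roots_charpoly_s18 fun j k => hpos _ _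
end
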